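/- Place four candidates in ℝ³ at y_1 = (1,0,0), y_2 = (0,1,0), y_3 = (0,0,1), y_4 = (r,r,r) with r > 2, and let n = 4. Then no anonymous deterministic strategy-proof two-winner scv mechanism for these candidates has finite distortion: for every such mechanism f there exist an action profile a and a location profile x consistent with a such that OPT(x) = 0 while SC(f(a), x) > 0. -/

import Mathlib

open Finset

/-- Cost of a point `z` when the pair of candidates `(y k, y l)` is elected:
the distance to the closer of the two winners. -/
noncomputable def pairCost {α : Type*} [PseudoMetricSpace α] {m : ℕ}
    (y : Fin m → α) (k l : Fin m) (z : α) : ℝ :=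
  min (dist z (y k)) (dist z (y l))

/-- Social cost of the pair `(y k, y l)` on the location profile `x`. -/
noncomputable def socialCost {α : Type*} [PseudoMetricSpace α] {m n : ℕ}
    (y : Fin m → α) (k l : Fin m) (x : Fin n → α) : ℝ :=
  ∑ i, pairCost y k l (x i)

/-- Optimal social cost over all pairs of distinct candidates. -/
noncomputable def OPT {α : Type*} [PseudoMetricSpace α] {m n : ℕ}
    (y : Fin m → α) (x : Fin n → α) : ℝ :=
  sInf {c : ℝ | ∃ k l : Fin m, k ≠ l ∧ c = socialCost y k l x}

/-- A location profile `x` is consistent with an action profile `a` if every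
voter votes for (one of) her nearest candidate(s). -/
def Consistent {α : Type*} [PseudoMetricSpace α] {m n : ℕ}
    (y : Fin m → α) (a : Fin n → Fin m) (x : Fin n → α) : Prop :=
  ∀ (i : Fin n) (k : Fin m), dist (x i) (y (a i)) ≤ dist (x i) (y k)

/-- Strategy-proofness of a deterministic two-winner mechanism. -/
def DetSP {α : Type*} [PseudoMetricSpace α] {m n : ℕ}
    (y : Fin m → α) (f : (Fin n → Fin m) → Fin m × Fin m) : Prop :=
  ∀ (i : Fin n) (xi : α) (a : Fin n → Fin m) (astar ai' : Fin m),
    (∀ k, dist xi (y astar) ≤ dist xi (y k)) →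
    pairCost y (f (Function.update a i astar)).1 (f (Function.update a i astar)).2 xi ≤
      pairCost y (f (Function.update a i ai')).1 (f (Function.update a i ai')).2 xi

/-- Number of votes received by candidate `k` under action profile `a`. -/
def votes {m n : ℕ} (a : Fin n → Fin m) (k : Fin m) : ℕ :=
  (univ.filter fun i => a i = k).card

/-!
Strategy-proofness, tested on a voter equidistant from two candidates and strictly farther from all
others, says that a voter whose vote loses cannot change the winning pair; hence a winner stays a
winner when further votes are moved to it. The midpoint of two candidates is such a location,
because the candidates form only acute triangles. Finite distortion says that two candidates who
share all the votes both win.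

Start from a profile voting for four different candidates and let `p` be a winner. Moving to `p`
all votes but three leads to the counts `p^(n-3) q s t`, where `p` wins and two of `q`, `s`, `t`,
say `s` and `t`, lose. Now move the vote for `q` to `p` as well. In the resulting profile
`p^(n-2) s t` the candidate `p` still wins. If `t` lost there, its vote could be moved to `p`, which
makes `s` win, and to `q`, which by anonymity is the profile obtained from the first one by moving
the losing vote for `t` to `p`, where `s` loses. So `t` wins, likewise `s`, and there are three
winners.
-/

section WinnerRule

variable {ι κ : Type*}

lemma exists_profile_forall_three_votes_ne [Fintype ι] [Fintype κ] (hι : 4 ≤ Fintype.card ι)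
    (hκ : 4 ≤ Fintype.card κ) :
    ∃ a : ι → κ, ∀ p, ∃ i j k, (a i ≠ p ∧ a j ≠ p ∧ a k ≠ p) ∧
      a i ≠ a j ∧ a i ≠ a k ∧ a j ≠ a k := by
  classical
  obtain ⟨e⟩ : Nonempty (Fin 4 ↪ ι) := Function.Embedding.nonempty_of_card_le (by simpa using hι)
  obtain ⟨c⟩ : Nonempty (Fin 4 ↪ κ) := Function.Embedding.nonempty_of_card_le (by simpa using hκ)
  refine ⟨Function.extend e c (fun _ => c 0), fun p => ?_⟩
  have hthree : 2 < #((univ.map c).erase p) :=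
    lt_of_lt_of_le (by simp) pred_card_le_card_erase
  obtain ⟨q, hq, s, hs, t, ht, hqs, hqt, hst⟩ := two_lt_card.1 hthree
  simp only [mem_erase, mem_map, mem_univ, true_and] at hq hs ht
  obtain ⟨hqp, i, rfl⟩ := hq
  obtain ⟨hsp, j, rfl⟩ := hs
  obtain ⟨htp, k, rfl⟩ := ht
  refine ⟨e i, e j, e k, ?_⟩
  simp only [e.injective.extend_apply]
  exact ⟨⟨hqp, hsp, htp⟩, hqs, hqt, hst⟩

/-- A rule choosing winners `W a` from a profile `a` is permutation-invariant if renaming the voters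
does not change the outcome: anonymity expressed without counting votes. -/
def PermInvariant (W : (ι → κ) → Finset κ) : Prop :=
  ∀ (a : ι → κ) (σ : Equiv.Perm ι), W (a ∘ σ) = W a

/-- A rule is pair-respecting if candidates sharing all the votes between two of them win as soon
as they receive a vote: what finite distortion imposes on a two-winner rule. -/
def PairRespecting (W : (ι → κ) → Finset κ) : Prop :=
  ∀ ⦃a : ι → κ⦄ ⦃k l : κ⦄, k ≠ l → (∀ i, a i = k ∨ a i = l) → ∀ i, a i ∈ W a

variable [DecidableEq ι]

/-- A rule is loser-independent if a voter whose vote loses cannot change the outcome: what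
strategy-proofness imposes on candidates with a complete Delaunay graph. -/
def LoserIndependent (W : (ι → κ) → Finset κ) : Prop :=
  ∀ ⦃a : ι → κ⦄ ⦃i : ι⦄, a i ∉ W a → ∀ k, W (Function.update a i k) = W a

variable {W : (ι → κ) → Finset κ} {a : ι → κ} {p : κ} {i j k : ι}

lemma LoserIndependent.mem_update (hW : LoserIndependent W) (hp : p ∈ W a) (i : ι) :
    p ∈ W (Function.update a i p) := by
  by_contra hlose
  have hback := hW (a := Function.update a i p) (i := i) (by simpa using hlose) (a i)
  rw [Function.update_idem, Function.update_eq_self] at hback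
  exact hlose (hback ▸ hp)

lemma LoserIndependent.mem_piecewise (hW : LoserIndependent W) (hp : p ∈ W a) (s : Finset ι) :
    p ∈ W (s.piecewise (fun _ => p) a) := by
  induction s using Finset.induction_on with
  | empty => simpa using hp
  | insert i s _ ih =>
    rw [piecewise_insert]
    exact hW.mem_update ih i

lemma PermInvariant.update_update (hW : PermInvariant W) (a : ι → κ) (p : κ) (hik : i ≠ k) :
    W (Function.update (Function.update a i p) k (a i)) = W (Function.update a k p) := by
  rw [← hW (Function.update a k p) (Equiv.swap i k)]
  congr 1
  ext v
  rcases eq_or_ne v k with rfl | hvk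
  · simp [hik]
  rcases eq_or_ne v i with rfl | hvi
  · simp [hik]
  · simp [hvk, hvi, Equiv.swap_apply_of_ne_of_ne]

lemma loser_mem_update_of_rest_vote_winner (hL : LoserIndependent W) (hA : PermInvariant W)
    (hP : PairRespecting W) (hij : i ≠ j) (hik : i ≠ k) (hjk : j ≠ k)
    (hrest : ∀ v, v ≠ i → v ≠ j → v ≠ k → a v = p) (hp : p ∈ W a) (hj : a j ∉ W a)
    (hk : a k ∉ W a) : a k ∈ W (Function.update a i p) := by
  set b := Function.update a i p with hb
  by_contra hlose
  have hloser : b k ∉ W b := by rwa [hb, Function.update_of_ne hik.symm]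
  have hbj : Function.update b k p j = a j := by simp [hb, hjk, hij.symm]
  have hpair : ∀ v, Function.update b k p v = p ∨ Function.update b k p v = a j := by
    intro v
    simp only [hb, Function.update_apply]
    grind
  have hwin : a j ∈ W b := by
    rw [← hL hloser p, ← hbj]
    exact hP (ne_of_mem_of_not_mem hp hj) hpair j
  have hWb : W b = W a :=
    calc W b = W (Function.update b k (a i)) := (hL hloser _).symm
      _ = W (Function.update a k p) := hA.update_update a p hik
      _ = W a := hL hk p
  exact hj (hWb ▸ hwin)

lemma mem_or_mem_of_rest_vote_winner (hL : LoserIndependent W) (hA : PermInvariant W)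
    (hP : PairRespecting W) (hcard : ∀ a, #(W a) ≤ 2) (hij : i ≠ j) (hik : i ≠ k)
    (hrest : ∀ v, v ≠ i → v ≠ j → v ≠ k → a v = p) (hp : p ∈ W a)
    (hajk : a j ≠ a k) : a j ∈ W a ∨ a k ∈ W a := by
  by_contra! hlose
  obtain ⟨hj, hk⟩ := hlose
  have hjk : j ≠ k := ne_of_apply_ne a hajk
  have hkwin := loser_mem_update_of_rest_vote_winner hL hA hP hij hik hjk hrest hp hj hk
  have hjwin := loser_mem_update_of_rest_vote_winner hL hA hP hik hij hjk.symm
    (fun v hi hk hj => hrest v hi hj hk) hp hk hj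
  have hthree : 2 < #(W (Function.update a i p)) := two_lt_card.2
    ⟨p, hL.mem_update hp i, a j, hjwin, a k, hkwin, ne_of_mem_of_not_mem hp hj,
      ne_of_mem_of_not_mem hp hk, hajk⟩
  exact hthree.not_ge (hcard _)

lemma LoserIndependent.exists_winner_three_votes_ne [Fintype ι] [Fintype κ]
    (hL : LoserIndependent W) (hι : 4 ≤ Fintype.card ι) (hκ : 4 ≤ Fintype.card κ)
    (hne : ∀ a, (W a).Nonempty) :
    ∃ a p i j k, p ∈ W a ∧ (∀ v, v ≠ i → v ≠ j → v ≠ k → a v = p) ∧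
      (a i ≠ p ∧ a j ≠ p ∧ a k ≠ p) ∧ a i ≠ a j ∧ a i ≠ a k ∧ a j ≠ a k := by
  obtain ⟨a, ha⟩ := exists_profile_forall_three_votes_ne (ι := ι) (κ := κ) hι hκ
  obtain ⟨p, hp⟩ := hne a
  obtain ⟨i, j, k, hvotes⟩ := ha p
  refine ⟨({i, j, k}ᶜ : Finset ι).piecewise (fun _ => p) a, p, i, j, k,
    hL.mem_piecewise hp _, fun v hi hj hk => ?_, ?_⟩
  · simp [hi, hj, hk]
  · simpa using hvotes

theorem not_pairRespecting [Fintype ι] [Fintype κ] (hL : LoserIndependent W)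
    (hA : PermInvariant W) (hι : 4 ≤ Fintype.card ι) (hκ : 4 ≤ Fintype.card κ)
    (hcard : ∀ a, #(W a) = 2) : ¬PairRespecting W := by
  intro hP
  have hcard_le : ∀ a, #(W a) ≤ 2 := fun a => (hcard a).le
  obtain ⟨a, p, i, j, k, hp, hrest, ⟨hip, hjp, hkp⟩, haij, haik, hajk⟩ :=
    hL.exists_winner_three_votes_ne hι hκ fun a => card_pos.1 (by simp [hcard])
  have hij := ne_of_apply_ne a haij
  have hik := ne_of_apply_ne a haik
  have hjk := ne_of_apply_ne a hajk
  have hwin_ij : a i ∈ W a ∨ a j ∈ W a :=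
    mem_or_mem_of_rest_vote_winner hL hA hP hcard_le hik.symm hjk.symm
      (fun v hk hi hj => hrest v hi hj hk) hp haij
  have hwin_ik : a i ∈ W a ∨ a k ∈ W a :=
    mem_or_mem_of_rest_vote_winner hL hA hP hcard_le hij.symm hjk
      (fun v hj hi hk => hrest v hi hj hk) hp haik
  have hwin_jk : a j ∈ W a ∨ a k ∈ W a :=
    mem_or_mem_of_rest_vote_winner hL hA hP hcard_le hij hik hrest hp hajk
  have hnot_both : ∀ q s, q ≠ p → s ≠ p → q ≠ s → q ∈ W a → s ∉ W a :=
    fun q s hqp hsp hqs hq hs =>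
      (two_lt_card.2 ⟨q, hq, s, hs, p, hp, hqs, hqp, hsp⟩).not_ge (hcard_le a)
  have hnot_ij := hnot_both _ _ hip hjp haij
  have hnot_ik := hnot_both _ _ hip hkp haik
  have hnot_jk := hnot_both _ _ hjp hkp hajk
  tauto

end WinnerRule

section Costs

variable {α : Type*} [PseudoMetricSpace α] {m n : ℕ} {y : Fin m → α}

/-- The candidates `y` have a complete Delaunay graph if any two of them are the only candidates
nearest to some point. The case `k = l` is included and rules out coinciding candidates. -/
def CompleteDelaunay {κ : Type*} (y : κ → α) : Prop :=
  ∀ k l, ∃ x, dist x (y k) = dist x (y l) ∧ ∀ j, j ≠ k → j ≠ l → dist x (y k) < dist x (y j)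

/-- The set of the two winners of the mechanism `f` on the profile `a`. -/
def winners (f : (Fin n → Fin m) → Fin m × Fin m) (a : Fin n → Fin m) : Finset (Fin m) :=
  {(f a).1, (f a).2}

variable {f : (Fin n → Fin m) → Fin m × Fin m} {a : Fin n → Fin m}

lemma pairCost_le_iff {z : α} {c : ℝ} :
    pairCost y (f a).1 (f a).2 z ≤ c ↔ ∃ q ∈ winners f a, dist z (y q) ≤ c := by
  simp [pairCost, winners]

lemma pairCost_nonneg (k l : Fin m) (z : α) : 0 ≤ pairCost y k l z :=
  le_min dist_nonneg dist_nonneg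

lemma CompleteDelaunay.dist_pos {κ : Type*} {y : κ → α} (hy : CompleteDelaunay y) {k l : κ}
    (hkl : k ≠ l) : 0 < dist (y k) (y l) := by
  obtain ⟨x, -, hx⟩ := hy k k
  have := dist_triangle x (y k) (y l)
  linarith [hx l hkl.symm hkl.symm]

lemma CompleteDelaunay.socialCost_pos (hy : CompleteDelaunay y) {i : Fin n}
    (hi : a i ∉ winners f a) : 0 < socialCost y (f a).1 (f a).2 (y ∘ a) := by
  refine sum_pos' (fun i _ => pairCost_nonneg _ _ _) ⟨i, mem_univ i, ?_⟩
  rw [← not_le, pairCost_le_iff]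
  rintro ⟨q, hq, hdist⟩
  exact hdist.not_gt (hy.dist_pos (ne_of_mem_of_not_mem hq hi).symm)

lemma OPT_eq_zero_of_socialCost_eq_zero {x : Fin n → α} {k l : Fin m} (hkl : k ≠ l)
    (h : socialCost y k l x = 0) : OPT y x = 0 := by
  have hnonneg : ∀ c ∈ {c | ∃ k l : Fin m, k ≠ l ∧ c = socialCost y k l x}, 0 ≤ c := by
    rintro c ⟨k, l, -, rfl⟩
    exact sum_nonneg fun i _ => pairCost_nonneg k l (x i)
  exact le_antisymm (csInf_le ⟨0, hnonneg⟩ ⟨k, l, hkl, h.symm⟩) (Real.sInf_nonneg hnonneg)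

lemma OPT_comp_eq_zero (y : Fin m → α) {k l : Fin m} (hkl : k ≠ l)
    (ha : ∀ i, a i = k ∨ a i = l) : OPT y (y ∘ a) = 0 := by
  refine OPT_eq_zero_of_socialCost_eq_zero hkl (sum_eq_zero fun i _ => ?_)
  rcases ha i with h | h <;> simp [pairCost, h]

lemma votes_comp_perm (a : Fin n → Fin m) (σ : Equiv.Perm (Fin n)) (k : Fin m) :
    votes (a ∘ σ) k = votes a k :=
  card_equiv σ (by simp)

lemma DetSP.loserIndependent (hsp : DetSP y f) (hy : CompleteDelaunay y)
    (hvalid : ∀ a, (f a).1 ≠ (f a).2) : LoserIndependent (winners f) := by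
  intro a i hi l
  refine eq_of_subset_of_card_le (fun q hq => ?_) (by simp [winners, hvalid])
  by_contra hqa
  obtain ⟨x, hxq, hx⟩ := hy (a i) q
  have hnearest : ∀ j, dist x (y (a i)) ≤ dist x (y j) := by
    intro j
    by_cases hj : j = a i ∨ j = q
    · rcases hj with rfl | rfl
      exacts [le_rfl, hxq.le]
    · exact (hx j (fun h => hj (.inl h)) (fun h => hj (.inr h))).le
  have htruth := hsp i x a (a i) l hnearest
  rw [Function.update_eq_self] at htruth
  obtain ⟨w, hw, hxw⟩ := pairCost_le_iff.1 (htruth.trans (pairCost_le_iff.2 ⟨q, hq, hxq.ge⟩))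
  exact hxw.not_gt (hx w (ne_of_mem_of_not_mem hw hi) (ne_of_mem_of_not_mem hw hqa))

theorem stmt13_general (hm : 4 ≤ m) (hn : 4 ≤ n) (hy : CompleteDelaunay y)
    (hvalid : ∀ a, (f a).1 ≠ (f a).2)
    (hanon : ∀ a a' : Fin n → Fin m, (∀ k, votes a k = votes a' k) → f a = f a')
    (hsp : DetSP y f) :
    ∃ (a : Fin n → Fin m) (x : Fin n → α),
      Consistent y a x ∧ OPT y x = 0 ∧ 0 < socialCost y (f a).1 (f a).2 x := by
  by_contra! hfinite
  have hA : PermInvariant (winners f) := fun a σ => by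
    rw [winners, winners, hanon _ _ (votes_comp_perm a σ)]
  have hP : PairRespecting (winners f) := by
    intro a k l hkl ha i
    by_contra hi
    exact (hfinite a (y ∘ a) (fun i j => by simp) (OPT_comp_eq_zero y hkl ha)).not_gt
      (hy.socialCost_pos hi)
  exact not_pairRespecting (hsp.loserIndependent hy hvalid) hA (by simpa) (by simpa)
    (fun a => card_pair (hvalid a)) hP

end Costs

section Geometry

variable {E : Type*} [NormedAddCommGroup E] [InnerProductSpace ℝ E]

lemma dist_midpoint_lt_dist_iff_inner_pos (u v w : E) :
    dist (midpoint ℝ u v) u < dist (midpoint ℝ u v) w ↔ 0 < inner ℝ (u - w) (v - w) := by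
  have hgap : dist (midpoint ℝ u v) w ^ 2 - dist (midpoint ℝ u v) u ^ 2 =
      inner ℝ (u - w) (v - w) := by
    have hsum : (u - w) + (v - w) = (2 : ℝ) • (midpoint ℝ u v - w) := by
      rw [midpoint_eq_smul_add, invOf_eq_inv]
      module
    have hadd := norm_add_sq_real (u - w) (v - w)
    have hsub := norm_sub_sq_real (u - w) (v - w)
    rw [hsum, norm_smul, Real.norm_ofNat] at hadd
    rw [sub_sub_sub_cancel_right] at hsub
    rw [dist_midpoint_left, dist_eq_norm, dist_eq_norm, Real.norm_ofNat]
    linarith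
  rw [← hgap, sub_pos, sq_lt_sq₀ dist_nonneg dist_nonneg]

lemma completeDelaunay_of_inner_pos {κ : Type*} {y : κ → E}
    (h : ∀ j k l, j ≠ k → j ≠ l → 0 < inner ℝ (y k - y j) (y l - y j)) : CompleteDelaunay y :=
  fun k l => ⟨midpoint ℝ (y k) (y l), by rw [dist_midpoint_left, dist_midpoint_right],
    fun j hjk hjl => (dist_midpoint_lt_dist_iff_inner_pos _ _ _).2 (h j k l hjk hjl)⟩

lemma completeDelaunay_basis_diagonal {r : ℝ} (hr : 2 / 3 < r) :
    CompleteDelaunay ![EuclideanSpace.single (0 : Fin 3) (1 : ℝ),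
      EuclideanSpace.single (1 : Fin 3) (1 : ℝ),
      EuclideanSpace.single (2 : Fin 3) (1 : ℝ),
      (WithLp.equiv 2 (Fin 3 → ℝ)).symm (fun _ => r)] := by
  refine completeDelaunay_of_inner_pos fun j k l hjk hjl => ?_
  -- The angles at `(r, r, r)` are the only ones whose acuteness depends on the size of `r`.
  have hapex : 0 < r * (3 * r - 2) := mul_pos (by linarith) (by linarith)
  have hside : 0 < (r - 1) ^ 2 + 2 * r ^ 2 := by positivity
  rw [PiLp.inner_apply, Fin.sum_univ_three]
  fin_cases j <;> fin_cases k <;> fin_cases l <;> simp at hjk hjl ⊢ <;>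
    linarith [hapex, hside]

end Geometry

/-- Four candidates in `ℝ³` at `e₁, e₂, e₃, (r,r,r)` (`r > 2`) with `n = 4`
voters: no anonymous deterministic strategy-proof two-winner scv mechanism has
finite distortion — there is a consistent instance with zero optimal cost on
which the mechanism incurs positive social cost. -/
theorem stmt13 (r : ℝ) (hr : 2 < r)
    (y : Fin 4 → EuclideanSpace ℝ (Fin 3))
    (hy : y = ![EuclideanSpace.single (0 : Fin 3) (1 : ℝ),
      EuclideanSpace.single (1 : Fin 3) (1 : ℝ),
      EuclideanSpace.single (2 : Fin 3) (1 : ℝ),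
      (WithLp.equiv 2 (Fin 3 → ℝ)).symm (fun _ => r)])
    (f : (Fin 4 → Fin 4) → Fin 4 × Fin 4)
    (hvalid : ∀ a, (f a).1 ≠ (f a).2)
    (hanon : ∀ a a' : Fin 4 → Fin 4, (∀ k, votes a k = votes a' k) → f a = f a')
    (hsp : DetSP y f) :
    ∃ (a : Fin 4 → Fin 4) (x : Fin 4 → EuclideanSpace ℝ (Fin 3)),
      Consistent y a x ∧ OPT y x = 0 ∧
        0 < socialCost y (f a).1 (f a).2 x := by
  have hdelaunay : CompleteDelaunay y := hy ▸ completeDelaunay_basis_diagonal (by linarith)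
  exact stmt13_general le_rfl le_rfl hdelaunay hvalid hanon hsp
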